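/- arXiv:2409.05619 — 3 statements merged into one kernel-verified Lean document; each statement's English description precedes it below -/
import Mathlib

section
/- Suppose 𝒮 is finite. If the topological interior of the deterministic code capacity region ℛ_d of the two-sender classical-quantum arbitrarily varying multiple access channel is nonempty, then ℛ_r ⊆ ℛ_d. -/
open scoped ComplexOrder

noncomputable section

/-- A density matrix: positive semidefinite with unit trace. -/
def IsDensity {m : Type*} [Fintype m] (ρ : Matrix m m ℂ) : Prop :=
  ρ.PosSemidef ∧ ρ.trace = 1

/-- Tensor product of a finite family of matrices, realized on functions. -/
def tensorFam {k d : Type*} [Fintype k] (ρ : k → Matrix d d ℂ) :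
    Matrix (k → d) (k → d) ℂ :=
  Matrix.of fun i j => ∏ a, ρ a (i a) (j a)

section Codes

variable {𝒳 𝒴 𝒮 : Type*} [Fintype 𝒳] [DecidableEq 𝒳] [Fintype 𝒴] [DecidableEq 𝒴] {d : ℕ}

/-- `(R₁, R₂)` is an achievable deterministic rate pair for the CQ-AVMAC. -/
def AchievableDet (ρ : 𝒳 → 𝒴 → 𝒮 → Matrix (Fin d) (Fin d) ℂ) (R1 R2 : ℝ) : Prop :=
  0 ≤ R1 ∧ 0 ≤ R2 ∧
  ∀ β > (0 : ℝ), ∀ δ₁ > (0 : ℝ), ∀ δ₂ > (0 : ℝ), ∃ N : ℕ, ∀ n ≥ N,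
    ∃ (M₁ M₂ : ℕ) (f₁ : Fin M₁ → (Fin n → 𝒳)) (f₂ : Fin M₂ → (Fin n → 𝒴))
      (D : Fin M₁ → Fin M₂ → Matrix (Fin n → Fin d) (Fin n → Fin d) ℂ),
      (∀ m₁ m₂, (D m₁ m₂).PosSemidef) ∧
      (∑ m₁, ∑ m₂, D m₁ m₂ = 1) ∧
      (1 / (n : ℝ)) * Real.logb 2 M₁ > R1 - δ₁ ∧
      (1 / (n : ℝ)) * Real.logb 2 M₂ > R2 - δ₂ ∧
      (⨆ sv : Fin n → 𝒮,
        1 - (1 / ((M₁ : ℝ) * (M₂ : ℝ))) * ∑ m₁, ∑ m₂,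
          (Matrix.trace (D m₁ m₂ *
            tensorFam fun k => ρ (f₁ m₁ k) (f₂ m₂ k) (sv k))).re) < β

/-- The deterministic code capacity region `ℛ_d`. -/
def Rd (ρ : 𝒳 → 𝒴 → 𝒮 → Matrix (Fin d) (Fin d) ℂ) : Set (ℝ × ℝ) :=
  closure {r : ℝ × ℝ | AchievableDet ρ r.1 r.2}

/-- `(R₁, R₂)` is an achievable randomized rate pair for the CQ-AVMAC. -/
def AchievableRand (ρ : 𝒳 → 𝒴 → 𝒮 → Matrix (Fin d) (Fin d) ℂ) (R1 R2 : ℝ) : Prop :=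
  0 ≤ R1 ∧ 0 ≤ R2 ∧
  ∀ β > (0 : ℝ), ∀ δ₁ > (0 : ℝ), ∀ δ₂ > (0 : ℝ), ∃ N : ℕ, ∀ n ≥ N,
    ∃ (M₁ M₂ k₁ k₂ : ℕ) (G₁ : Fin k₁ → ℝ) (G₂ : Fin k₂ → ℝ)
      (f₁ : Fin k₁ → Fin M₁ → (Fin n → 𝒳)) (f₂ : Fin k₂ → Fin M₂ → (Fin n → 𝒴))
      (D : Fin k₁ → Fin k₂ → Fin M₁ → Fin M₂ →
        Matrix (Fin n → Fin d) (Fin n → Fin d) ℂ),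
      (∀ γ, 0 ≤ G₁ γ) ∧ (∑ γ, G₁ γ = 1) ∧ (∀ γ, 0 ≤ G₂ γ) ∧ (∑ γ, G₂ γ = 1) ∧
      (∀ γ₁ γ₂ m₁ m₂, (D γ₁ γ₂ m₁ m₂).PosSemidef) ∧
      (∀ γ₁ γ₂, ∑ m₁, ∑ m₂, D γ₁ γ₂ m₁ m₂ = 1) ∧
      (1 / (n : ℝ)) * Real.logb 2 M₁ > R1 - δ₁ ∧
      (1 / (n : ℝ)) * Real.logb 2 M₂ > R2 - δ₂ ∧
      (⨆ sv : Fin n → 𝒮, ∑ γ₁, ∑ γ₂, G₁ γ₁ * G₂ γ₂ *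
        (1 - (1 / ((M₁ : ℝ) * (M₂ : ℝ))) * ∑ m₁, ∑ m₂,
          (Matrix.trace (D γ₁ γ₂ m₁ m₂ *
            tensorFam fun k => ρ (f₁ γ₁ m₁ k) (f₂ γ₂ m₂ k) (sv k))).re)) < β

/-- The random code capacity region `ℛ_r`. -/
def Rr (ρ : 𝒳 → 𝒴 → 𝒮 → Matrix (Fin d) (Fin d) ℂ) : Set (ℝ × ℝ) :=
  closure {r : ℝ × ℝ | AchievableRand ρ r.1 r.2}

end Codes

open scoped Kronecker in
lemma trace_mul_re_nonneg {m : Type*} [Fintype m] [DecidableEq m] {A B : Matrix m m ℂ}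
    (hA : A.PosSemidef) (hB : B.PosSemidef) : 0 ≤ (Matrix.trace (A * B)).re := by
  obtain ⟨C, rfl⟩ : ∃ C : Matrix m m ℂ, B = C.conjTranspose * C := by
    open scoped MatrixOrder in
    obtain ⟨C, hC⟩ := CStarAlgebra.nonneg_iff_eq_star_mul_self.mp hB.nonneg
    exact ⟨C, hC⟩
  rw [← mul_assoc, Matrix.trace_mul_comm, ← mul_assoc]
  have := (hA.mul_mul_conjTranspose_same C).trace_nonneg
  exact (Complex.le_def.mp this).1

lemma tensorFam_mul {k : Type*} [Fintype k] [DecidableEq k] {d : ℕ}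
    (A B : k → Matrix (Fin d) (Fin d) ℂ) :
    tensorFam (fun a => A a * B a) = tensorFam A * tensorFam B := by
  ext i j
  simp only [tensorFam, Matrix.of_apply, Matrix.mul_apply]
  rw [Fintype.prod_sum]
  simp only [Finset.prod_mul_distrib]

lemma tensorFam_density {k : Type*} [Fintype k] [DecidableEq k] {d : ℕ}
    (A : k → Matrix (Fin d) (Fin d) ℂ) (hA : ∀ a, IsDensity (A a)) :
    IsDensity (tensorFam A) := by
  constructor
  · have h : ∀ a, ∃ C : Matrix (Fin d) (Fin d) ℂ, A a = C.conjTranspose * C := by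
      intro a
      open scoped MatrixOrder in
      obtain ⟨C, hC⟩ := CStarAlgebra.nonneg_iff_eq_star_mul_self.mp (hA a).1.nonneg
      exact ⟨C, hC⟩
    choose C hC using h
    have h2 : tensorFam A = (tensorFam C).conjTranspose * tensorFam C := by
      have : (tensorFam C).conjTranspose = tensorFam (fun a => (C a).conjTranspose) := by
        ext i j
        simp [tensorFam, Matrix.conjTranspose_apply]
      rw [this, ← tensorFam_mul]
      congr 1
      funext a
      exact hC a
    rw [h2]
    exact Matrix.posSemidef_conjTranspose_mul_self _
  · have h1 : ∏ a, (A a).trace = 1 := by simp [(hA _).2]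
    rw [← h1]
    simp only [Matrix.trace, Matrix.diag_apply, tensorFam, Matrix.of_apply]
    rw [Fintype.prod_sum]

lemma povm_bounds {m : Type*} [Fintype m] [DecidableEq m] {a b : ℕ}
    (D : Fin a → Fin b → Matrix m m ℂ) (hD : ∀ i j, (D i j).PosSemidef)
    (hs : ∑ i, ∑ j, D i j = 1) {σ : Matrix m m ℂ} (hσ : IsDensity σ) (i : Fin a) (j : Fin b) :
    0 ≤ (Matrix.trace (D i j * σ)).re ∧ (Matrix.trace (D i j * σ)).re ≤ 1 := by
  have h0 : ∀ i j, 0 ≤ (Matrix.trace (D i j * σ)).re := fun i j =>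
    trace_mul_re_nonneg (hD i j) hσ.1
  refine ⟨h0 i j, ?_⟩
  have h1 : ∑ i, ∑ j, (Matrix.trace (D i j * σ)).re = 1 := by
    have : Matrix.trace ((∑ i, ∑ j, D i j) * σ) = 1 := by rw [hs, one_mul, hσ.2]
    have h2 := congrArg Complex.re this
    simpa [Finset.sum_mul, Matrix.trace_sum] using h2
  rw [← h1]
  calc _ ≤ ∑ j, (Matrix.trace (D i j * σ)).re :=
        Finset.single_le_sum (f := fun j => (Matrix.trace (D i j * σ)).re)
          (fun j _ => h0 i j) (Finset.mem_univ j)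
    _ ≤ _ := Finset.single_le_sum (f := fun i => ∑ j, (Matrix.trace (D i j * σ)).re)
          (fun i _ => Finset.sum_nonneg fun j _ => h0 i j) (Finset.mem_univ i)

/-- Index splitting for a concatenated block. -/
def splitEquiv (k l : ℕ) (α : Type*) : (Fin (k + l) → α) ≃ (Fin k → α) × (Fin l → α) :=
  (Fin.appendEquiv k l).symm

open scoped Kronecker in
/-- Tensor product of operators on two consecutive blocks. -/
def joinMat {k l d : ℕ} (A : Matrix (Fin k → Fin d) (Fin k → Fin d) ℂ)
    (B : Matrix (Fin l → Fin d) (Fin l → Fin d) ℂ) :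
    Matrix (Fin (k + l) → Fin d) (Fin (k + l) → Fin d) ℂ :=
  (A ⊗ₖ B).submatrix (splitEquiv k l (Fin d)) (splitEquiv k l (Fin d))

lemma joinMat_posSemidef {k l d : ℕ} {A : Matrix (Fin k → Fin d) (Fin k → Fin d) ℂ}
    {B : Matrix (Fin l → Fin d) (Fin l → Fin d) ℂ} (hA : A.PosSemidef) (hB : B.PosSemidef) :
    (joinMat A B).PosSemidef :=
  (hA.kronecker hB).submatrix _

open scoped Kronecker in
lemma joinMat_trace {k l d : ℕ} (A A' : Matrix (Fin k → Fin d) (Fin k → Fin d) ℂ)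
    (B B' : Matrix (Fin l → Fin d) (Fin l → Fin d) ℂ) :
    Matrix.trace (joinMat A B * joinMat A' B') =
      Matrix.trace (A * A') * Matrix.trace (B * B') := by
  unfold joinMat
  rw [Matrix.submatrix_mul_equiv, ← Matrix.mul_kronecker_mul, ← Matrix.trace_kronecker]
  exact Equiv.sum_comp (splitEquiv k l (Fin d)) fun x => ((A * A') ⊗ₖ (B * B')) x x

lemma joinMat_sum {k l d : ℕ} {ι κ : Type*} [Fintype ι] [Fintype κ]
    (A : ι → Matrix (Fin k → Fin d) (Fin k → Fin d) ℂ)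
    (B : ι → κ → Matrix (Fin l → Fin d) (Fin l → Fin d) ℂ)
    (hA : ∑ i, A i = 1) (hB : ∀ i, ∑ j, B i j = 1) :
    ∑ i, ∑ j, joinMat (A i) (B i j) = 1 := by
  have h1 : ∀ i, ∑ j, joinMat (A i) (B i j) = joinMat (A i) 1 := by
    intro i
    rw [← hB i]
    ext x y
    simp [joinMat, Matrix.sum_apply, Finset.mul_sum]
  simp only [h1]
  have h2 : ∑ i, joinMat (A i) 1 = joinMat (l := l) 1 1 := by
    rw [← hA]
    ext x y
    simp only [joinMat, Matrix.sum_apply, Matrix.submatrix_apply, Matrix.kroneckerMap_apply,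
      Finset.sum_mul]
  rw [h2]
  unfold joinMat
  rw [Matrix.one_kronecker_one, Matrix.submatrix_one_equiv]

lemma joinMat_tensorFam {k l d : ℕ} (A : Fin (k + l) → Matrix (Fin d) (Fin d) ℂ) :
    tensorFam A = joinMat (tensorFam fun a => A (Fin.castAdd l a))
      (tensorFam fun a => A (Fin.natAdd k a)) := by
  ext x y
  simp [tensorFam, joinMat, Fin.prod_univ_add, splitEquiv, Fin.appendEquiv]

lemma sampling_aux {ι T : Type*} [Fintype ι] [Fintype T] (G : ι → ℝ) (hG0 : ∀ i, 0 ≤ G i)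
    (hG1 : ∑ i, G i = 1) (e : ι → T → ℝ) (he0 : ∀ i t, 0 ≤ e i t) (he1 : ∀ i t, e i t ≤ 1)
    (ε : ℝ) (hε0 : 0 ≤ ε) (hε : ∀ t, ∑ i, G i * e i t ≤ ε) (K : ℕ) :
    ∃ g : Fin K → ι, ∑ t, Real.exp (∑ j, e (g j) t) ≤ Fintype.card T * (1 + 2 * ε) ^ K := by
  induction K with
  | zero => exact ⟨Fin.elim0, by simp⟩
  | succ K ih =>
    obtain ⟨g, hg⟩ := ih
    set w : T → ℝ := fun t => Real.exp (∑ j, e (g j) t) with hw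
    have hexp : ∀ x : ℝ, 0 ≤ x → x ≤ 1 → Real.exp x ≤ 1 + 2 * x := by
      intro x h0 h1
      have := Real.exp_bound' h0 h1 (n := 2) (by norm_num)
      simp [Finset.sum_range_succ] at this
      nlinarith
    have key : ∑ i, G i * ∑ t, w t * Real.exp (e i t) ≤
        ∑ i, G i * ((1 + 2 * ε) * ∑ t, w t) := by
      rw [← Finset.sum_mul, hG1, one_mul, Finset.mul_sum]
      simp only [Finset.mul_sum]
      rw [Finset.sum_comm]
      apply Finset.sum_le_sum
      intro t _
      have hwt : 0 ≤ w t := (Real.exp_pos _).le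
      calc ∑ i, G i * (w t * Real.exp (e i t))
          ≤ ∑ i, w t * (G i + 2 * (G i * e i t)) := by
            apply Finset.sum_le_sum
            intro i _
            have := mul_le_mul_of_nonneg_left (hexp _ (he0 i t) (he1 i t))
              (mul_nonneg hwt (hG0 i))
            nlinarith
        _ = w t * (1 + 2 * ∑ i, G i * e i t) := by
            rw [← Finset.mul_sum, Finset.sum_add_distrib, hG1, Finset.mul_sum]
        _ ≤ _ := by
            have := mul_le_mul_of_nonneg_left (hε t) hwt
            nlinarith
    obtain ⟨i, hi⟩ : ∃ i, ∑ t, w t * Real.exp (e i t) ≤ (1 + 2 * ε) * ∑ t, w t := by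
      by_contra! hcon
      have hlt : ∑ i, G i * ((1 + 2 * ε) * ∑ t, w t) <
          ∑ i, G i * ∑ t, w t * Real.exp (e i t) := by
        apply Finset.sum_lt_sum
        · intro i _
          exact mul_le_mul_of_nonneg_left (hcon i).le (hG0 i)
        · obtain ⟨i, hi⟩ : ∃ i, 0 < G i := by
            by_contra! h
            have := Finset.sum_nonpos (s := Finset.univ) fun i _ => h i
            linarith
          exact ⟨i, Finset.mem_univ _, mul_lt_mul_of_pos_left (hcon i) hi⟩
      linarith
    refine ⟨Fin.snoc g i, ?_⟩
    simp only [Fin.sum_univ_castSucc, Fin.snoc_castSucc, Fin.snoc_last, Real.exp_add]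
    calc _ ≤ (1 + 2 * ε) * ∑ t, w t := hi
      _ ≤ (1 + 2 * ε) * (Fintype.card T * (1 + 2 * ε) ^ K) :=
        mul_le_mul_of_nonneg_left hg (by linarith)
      _ = _ := by ring

lemma sampling {ι T : Type*} [Fintype ι] [Fintype T] (G : ι → ℝ) (hG0 : ∀ i, 0 ≤ G i)
    (hG1 : ∑ i, G i = 1) (e : ι → T → ℝ) (he0 : ∀ i t, 0 ≤ e i t) (he1 : ∀ i t, e i t ≤ 1)
    (ε ε' : ℝ) (hε0 : 0 ≤ ε) (hε : ∀ t, ∑ i, G i * e i t ≤ ε) (K : ℕ) (hK : 0 < K)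
    (hcard : Real.log (Fintype.card T) ≤ ε' * K) :
    ∃ g : Fin K → ι, ∀ t, (1 / (K : ℝ)) * ∑ j, e (g j) t ≤ 2 * ε + ε' := by
  obtain ⟨g, hg⟩ := sampling_aux G hG0 hG1 e he0 he1 ε hε0 hε K
  refine ⟨g, fun t => ?_⟩
  have hT : (0 : ℝ) < Fintype.card T := by
    have : Nonempty T := ⟨t⟩
    exact_mod_cast Fintype.card_pos
  have h1 : Real.exp (∑ j, e (g j) t) ≤ Fintype.card T * (1 + 2 * ε) ^ K :=
    (Finset.single_le_sum (f := fun t => Real.exp (∑ j, e (g j) t))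
      (fun t _ => (Real.exp_pos _).le) (Finset.mem_univ t)).trans hg
  have h2 : (1 + 2 * ε) ^ K ≤ Real.exp (K * (2 * ε)) := by
    rw [Real.exp_nat_mul]
    apply pow_le_pow_left₀ (by linarith)
    linarith [Real.add_one_le_exp (2 * ε)]
  have h3 : Real.exp (∑ j, e (g j) t) ≤ Real.exp (Real.log (Fintype.card T) + K * (2 * ε)) := by
    rw [Real.exp_add, Real.exp_log hT]
    exact h1.trans (mul_le_mul_of_nonneg_left h2 hT.le)
  have h4 := Real.exp_le_exp.mp h3
  have hK' : (0 : ℝ) < K := by exact_mod_cast hK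
  rw [one_div, inv_mul_le_iff₀ hK']
  nlinarith

lemma real_concat {P₁ P₂ M₁ M₂ : ℕ} (hP₁ : 0 < P₁) (hP₂ : 0 < P₂) (hM₁ : 0 < M₁) (hM₂ : 0 < M₂)
    (p : Fin P₁ → Fin P₂ → ℝ) (q : Fin P₁ → Fin P₂ → Fin M₁ → Fin M₂ → ℝ)
    (hp : ∀ i j, p i j ≤ 1) (hq : ∀ i j m m', q i j m m' ≤ 1) :
    1 - (1 / (((P₁ * M₁ : ℕ) : ℝ) * ((P₂ * M₂ : ℕ) : ℝ))) *
        ∑ i, ∑ m, ∑ j, ∑ m', p i j * q i j m m' ≤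
      (1 - (1 / ((P₁ : ℝ) * (P₂ : ℝ))) * ∑ i, ∑ j, p i j) +
      (1 / (P₁ : ℝ)) * ∑ i, (1 / (P₂ : ℝ)) * ∑ j,
        (1 - (1 / ((M₁ : ℝ) * (M₂ : ℝ))) * ∑ m, ∑ m', q i j m m') := by
  have h1 : ∑ i, ∑ j, ((M₁ : ℝ) * M₂ * p i j + ∑ m, ∑ m', q i j m m' - M₁ * M₂) ≤
      ∑ i, ∑ m, ∑ j, ∑ m', p i j * q i j m m' := by
    apply Finset.sum_le_sum
    intro i _
    rw [Finset.sum_comm]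
    apply Finset.sum_le_sum
    intro j _
    have : ((M₁ : ℝ) * M₂ * p i j + ∑ m, ∑ m', q i j m m' - M₁ * M₂) =
        ∑ m, ∑ m', (p i j + q i j m m' - 1) := by
      simp [Finset.sum_add_distrib, Finset.sum_sub_distrib]
      ring
    rw [this]
    apply Finset.sum_le_sum
    intro m _
    apply Finset.sum_le_sum
    intro m' _
    nlinarith [hp i j, hq i j m m']
  have h2 : ∑ i, ∑ j, ((M₁ : ℝ) * M₂ * p i j + ∑ m, ∑ m', q i j m m' - M₁ * M₂) =
      M₁ * M₂ * (∑ i, ∑ j, p i j) + (∑ i, ∑ j, ∑ m, ∑ m', q i j m m') - P₁ * P₂ * (M₁ * M₂) := by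
    simp only [Finset.sum_add_distrib, Finset.sum_sub_distrib, Finset.mul_sum]
    simp
    ring
  have h3 : ∑ i : Fin P₁, (1 / (P₂ : ℝ)) * ∑ j : Fin P₂,
        (1 - (1 / ((M₁ : ℝ) * (M₂ : ℝ))) * ∑ m, ∑ m', q i j m m') =
      (1 / (P₂ : ℝ)) * (P₁ * P₂ - (1 / ((M₁ : ℝ) * (M₂ : ℝ))) *
        ∑ i, ∑ j, ∑ m, ∑ m', q i j m m') := by
    rw [← Finset.mul_sum]
    congr 1
    simp only [Finset.sum_sub_distrib, ← Finset.mul_sum]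
    simp
  rw [h2] at h1
  rw [h3]
  set A := ∑ i, ∑ j, p i j
  set B := ∑ i, ∑ j, ∑ m, ∑ m', q i j m m'
  set S := ∑ i, ∑ m, ∑ j, ∑ m', p i j * q i j m m'
  have e1 : (0 : ℝ) < P₁ := by exact_mod_cast hP₁
  have e2 : (0 : ℝ) < P₂ := by exact_mod_cast hP₂
  have e3 : (0 : ℝ) < M₁ := by exact_mod_cast hM₁
  have e4 : (0 : ℝ) < M₂ := by exact_mod_cast hM₂
  push_cast
  have h4 := mul_le_mul_of_nonneg_left h1
    (show (0 : ℝ) ≤ 1 / ((P₁ * M₁ : ℝ) * (P₂ * M₂)) by positivity)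
  have h5 : 1 / ((P₁ * M₁ : ℝ) * (P₂ * M₂)) * (M₁ * M₂ * A + B - P₁ * P₂ * (M₁ * M₂)) =
      1 - ((1 - 1 / ((P₁ : ℝ) * P₂) * A) +
        1 / (P₁ : ℝ) * (1 / P₂ * (P₁ * P₂ - 1 / (M₁ * M₂) * B))) := by
    field_simp
    ring
  linarith

lemma concat {𝒳 𝒴 𝒮 : Type*} {d : ℕ} (ρ : 𝒳 → 𝒴 → 𝒮 → Matrix (Fin d) (Fin d) ℂ)
    (hρ : ∀ x y s, IsDensity (ρ x y s)) {k l P₁ P₂ M₁ M₂ : ℕ}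
    (hP₁ : 0 < P₁) (hP₂ : 0 < P₂) (hM₁ : 0 < M₁) (hM₂ : 0 < M₂)
    (u₁ : Fin P₁ → Fin k → 𝒳) (u₂ : Fin P₂ → Fin k → 𝒴)
    (E : Fin P₁ → Fin P₂ → Matrix (Fin k → Fin d) (Fin k → Fin d) ℂ)
    (hE : ∀ i j, (E i j).PosSemidef) (hEs : ∑ i, ∑ j, E i j = 1)
    (f₁ : Fin P₁ → Fin M₁ → Fin l → 𝒳) (f₂ : Fin P₂ → Fin M₂ → Fin l → 𝒴)
    (D : Fin P₁ → Fin P₂ → Fin M₁ → Fin M₂ → Matrix (Fin l → Fin d) (Fin l → Fin d) ℂ)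
    (hD : ∀ i j m m', (D i j m m').PosSemidef) (hDs : ∀ i j, ∑ m, ∑ m', D i j m m' = 1)
    (a b : ℝ)
    (ha : ∀ sv : Fin k → 𝒮, 1 - (1 / ((P₁ : ℝ) * (P₂ : ℝ))) * ∑ i, ∑ j,
      (Matrix.trace (E i j * tensorFam fun t => ρ (u₁ i t) (u₂ j t) (sv t))).re ≤ a)
    (hb : ∀ sv : Fin l → 𝒮, (1 / (P₁ : ℝ)) * ∑ i, (1 / (P₂ : ℝ)) * ∑ j,
      (1 - (1 / ((M₁ : ℝ) * (M₂ : ℝ))) * ∑ m, ∑ m',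
        (Matrix.trace (D i j m m' * tensorFam fun t => ρ (f₁ i m t) (f₂ j m' t) (sv t))).re) ≤ b) :
    ∃ (F₁ : Fin (P₁ * M₁) → (Fin (k + l) → 𝒳)) (F₂ : Fin (P₂ * M₂) → (Fin (k + l) → 𝒴))
      (D' : Fin (P₁ * M₁) → Fin (P₂ * M₂) →
        Matrix (Fin (k + l) → Fin d) (Fin (k + l) → Fin d) ℂ),
      (∀ m₁ m₂, (D' m₁ m₂).PosSemidef) ∧
      (∑ m₁, ∑ m₂, D' m₁ m₂ = 1) ∧
      ∀ sv : Fin (k + l) → 𝒮,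
        1 - (1 / (((P₁ * M₁ : ℕ) : ℝ) * ((P₂ * M₂ : ℕ) : ℝ))) * ∑ m₁, ∑ m₂,
          (Matrix.trace (D' m₁ m₂ *
            tensorFam fun t => ρ (F₁ m₁ t) (F₂ m₂ t) (sv t))).re ≤ a + b := by
  refine ⟨fun m => Fin.append (u₁ (finProdFinEquiv.symm m).1)
      (f₁ (finProdFinEquiv.symm m).1 (finProdFinEquiv.symm m).2),
    fun m => Fin.append (u₂ (finProdFinEquiv.symm m).1)
      (f₂ (finProdFinEquiv.symm m).1 (finProdFinEquiv.symm m).2),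
    fun m m' => joinMat (E (finProdFinEquiv.symm m).1 (finProdFinEquiv.symm m').1)
      (D (finProdFinEquiv.symm m).1 (finProdFinEquiv.symm m').1
        (finProdFinEquiv.symm m).2 (finProdFinEquiv.symm m').2), ?_, ?_, ?_⟩
  · intro m m'
    exact joinMat_posSemidef (hE _ _) (hD _ _ _ _)
  · rw [← finProdFinEquiv.sum_comp]
    simp only [← (finProdFinEquiv (m := P₂) (n := M₂)).sum_comp, Equiv.symm_apply_apply,
      Fintype.sum_prod_type]
    have := joinMat_sum (ι := Fin P₁ × Fin P₂) (κ := Fin M₁ × Fin M₂)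
      (fun x => E x.1 x.2) (fun x y => D x.1 x.2 y.1 y.2)
      (by simpa [Fintype.sum_prod_type] using hEs)
      (fun x => by simpa [Fintype.sum_prod_type] using hDs x.1 x.2)
    rw [← this]
    simp only [Fintype.sum_prod_type]
    refine Finset.sum_congr rfl fun i _ => ?_
    rw [Finset.sum_comm]
  · intro sv
    rw [← finProdFinEquiv.sum_comp]
    simp only [← (finProdFinEquiv (m := P₂) (n := M₂)).sum_comp, Equiv.symm_apply_apply,
      Fintype.sum_prod_type, joinMat_tensorFam, joinMat_trace, Fin.append_left, Fin.append_right]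
    have hEd : ∀ i j, IsDensity (tensorFam fun t => ρ (u₁ i t) (u₂ j t) (sv (Fin.castAdd l t))) :=
      fun i j => tensorFam_density _ fun t => hρ _ _ _
    have hDd : ∀ i j m m', IsDensity
        (tensorFam fun t => ρ (f₁ i m t) (f₂ j m' t) (sv (Fin.natAdd k t))) :=
      fun i j m m' => tensorFam_density _ fun t => hρ _ _ _
    have him : ∀ {m : Type} [Fintype m] [DecidableEq m] {A B : Matrix m m ℂ},
        A.PosSemidef → B.PosSemidef → (Matrix.trace (A * B)).im = 0 := by
      intro m _ _ A B hA hB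
      have h : star (Matrix.trace (A * B)) = Matrix.trace (A * B) := by
        rw [← Matrix.trace_conjTranspose, Matrix.conjTranspose_mul, hA.1.eq, hB.1.eq,
          Matrix.trace_mul_comm]
      exact Complex.conj_eq_iff_im.mp h
    simp only [Complex.mul_re, him (hE _ _) (hEd _ _).1, zero_mul, sub_zero]
    refine (real_concat hP₁ hP₂ hM₁ hM₂ _ _ ?_ ?_).trans
      (add_le_add (ha fun t => sv (Fin.castAdd l t)) (hb fun t => sv (Fin.natAdd k t)))
    · intro i j
      exact (povm_bounds E hE hEs (hEd i j) i j).2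
    · intro i j m m'
      exact (povm_bounds (D i j) (hD i j) (hDs i j) (hDd i j m m') m m').2

lemma size_bound (r : ℝ) (hr : 0 < r) (C : ℝ) : ∃ k₀ : ℕ, ∀ k ≥ k₀, ∀ P : ℕ,
    (1 / (k : ℝ)) * Real.logb 2 P > r → C * (k + 1) ≤ P := by
  have hl : 0 < Real.log 2 := Real.log_pos (by norm_num)
  set c := r * Real.log 2 with hc
  have hcpos : 0 < c := mul_pos hr hl
  obtain ⟨k₀, hk₀⟩ := exists_nat_ge (4 * |C| / c ^ 2)
  refine ⟨k₀ + 1, fun k hk P hP => ?_⟩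
  have hk1 : (k₀ : ℝ) + 1 ≤ k := by exact_mod_cast hk
  have hk0 : (0 : ℝ) ≤ k₀ := Nat.cast_nonneg _
  have hkpos : (0 : ℝ) < k := by linarith
  have h1 : k * c < Real.log P := by
    rw [gt_iff_lt, Real.logb, one_div, lt_inv_mul_iff₀ hkpos, lt_div_iff₀ hl] at hP
    rw [hc]; linarith
  have hlog : 0 < Real.log P := lt_trans (by positivity) h1
  have hPpos : (0 : ℝ) < P := by
    rcases (Nat.cast_nonneg (α := ℝ) P).eq_or_lt with h | h
    · rw [← h] at hlog; simp at hlog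
    · exact h
  have h2 : (P : ℝ) = Real.exp (Real.log P) := (Real.exp_log hPpos).symm
  have h3 := Real.quadratic_le_exp_of_nonneg (x := k * c) (by positivity)
  have h4 : Real.exp (k * c) ≤ P := by rw [h2]; exact Real.exp_le_exp.mpr h1.le
  have h5 : 4 * |C| ≤ k * c ^ 2 := by
    rw [div_le_iff₀ (by positivity)] at hk₀
    nlinarith [sq_nonneg c]
  have h6 : (k * c) ^ 2 / 2 ≤ P := by nlinarith [mul_pos hkpos hcpos]
  have h7 : C * (k + 1) ≤ |C| * (2 * k) := by
    have : C ≤ |C| := le_abs_self C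
    nlinarith [abs_nonneg C]
  nlinarith

lemma rate_bound {k l q P M : ℕ} {R δ : ℝ} (hR : 0 ≤ R) (hδ : 0 < δ) (hq : 2 * R ≤ q * δ)
    (hqk : q * k ≤ k + l) (hl : 0 < l) (hP : 0 < P) (hM : 0 < M)
    (h : (1 / (l : ℝ)) * Real.logb 2 M > R - δ / 2) :
    (1 / ((k + l : ℕ) : ℝ)) * Real.logb 2 ((P * M : ℕ) : ℝ) > R - δ := by
  have hl' : (0 : ℝ) < l := by exact_mod_cast hl
  have hP' : (1 : ℝ) ≤ P := by exact_mod_cast hP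
  have hM' : (0 : ℝ) < M := by exact_mod_cast hM
  have hqk' : (q : ℝ) * k ≤ k + l := by exact_mod_cast hqk
  have hk' : (0 : ℝ) ≤ k := Nat.cast_nonneg _
  push_cast
  rw [gt_iff_lt, one_div, lt_inv_mul_iff₀ hl'] at h
  rw [gt_iff_lt, one_div, lt_inv_mul_iff₀ (by linarith), Real.logb_mul (by linarith) (by linarith)]
  have h0 : 0 ≤ Real.logb 2 P := Real.logb_nonneg (by norm_num) hP'
  have h1 := mul_le_mul_of_nonneg_right hq hk'
  have h2 := mul_le_mul_of_nonneg_right hqk' hδ.le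
  nlinarith

lemma avg_bounds {M₁ M₂ : ℕ} (q : Fin M₁ → Fin M₂ → ℝ) (h0 : ∀ i j, 0 ≤ q i j)
    (h1 : ∀ i j, q i j ≤ 1) :
    0 ≤ 1 - (1 / ((M₁ : ℝ) * (M₂ : ℝ))) * ∑ i, ∑ j, q i j ∧
      1 - (1 / ((M₁ : ℝ) * (M₂ : ℝ))) * ∑ i, ∑ j, q i j ≤ 1 := by
  have hS0 : 0 ≤ ∑ i, ∑ j, q i j :=
    Finset.sum_nonneg fun i _ => Finset.sum_nonneg fun j _ => h0 i j
  have hS1 : ∑ i, ∑ j, q i j ≤ (M₁ : ℝ) * M₂ := by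
    calc ∑ i, ∑ j, q i j ≤ ∑ i : Fin M₁, ∑ j : Fin M₂, (1 : ℝ) :=
          Finset.sum_le_sum fun i _ => Finset.sum_le_sum fun j _ => h1 i j
      _ = _ := by simp
  have hM : (0 : ℝ) ≤ (M₁ : ℝ) * M₂ := by positivity
  constructor
  · rw [sub_nonneg, one_div]
    exact inv_mul_le_one_of_le₀ hS1 hM
  · have : 0 ≤ (1 / ((M₁ : ℝ) * (M₂ : ℝ))) * ∑ i, ∑ j, q i j := by positivity
    linarith

lemma derandomize {𝒳 𝒴 𝒮 : Type*} [Fintype 𝒳] [DecidableEq 𝒳] [Fintype 𝒴] [DecidableEq 𝒴]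
    [Fintype 𝒮] [Nonempty 𝒮] {d : ℕ}
    (ρ : 𝒳 → 𝒴 → 𝒮 → Matrix (Fin d) (Fin d) ℂ)
    (hρ : ∀ x y s, IsDensity (ρ x y s)) {r₁ r₂ R₁ R₂ : ℝ} (hr₁ : 0 < r₁) (hr₂ : 0 < r₂)
    (hdet : AchievableDet ρ r₁ r₂) (hrand : AchievableRand ρ R₁ R₂) :
    AchievableDet ρ R₁ R₂ := by
  classical
  obtain ⟨hR₁, hR₂, hrand⟩ := hrand
  obtain ⟨-, -, hdet⟩ := hdet
  refine ⟨hR₁, hR₂, fun β hβ δ₁ hδ₁ δ₂ hδ₂ => ?_⟩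
  set ε : ℝ := min β 1 / 16 with hε
  have hε0 : 0 < ε := by have : 0 < min β 1 := lt_min hβ one_pos; positivity
  have hεβ : 16 * ε ≤ β := by rw [hε]; linarith [min_le_left β 1]
  have hε1 : 16 * ε ≤ 1 := by rw [hε]; linarith [min_le_right β 1]
  obtain ⟨Nr, hNr⟩ := hrand ε hε0 (δ₁ / 2) (by linarith) (δ₂ / 2) (by linarith)
  obtain ⟨Nd, hNd⟩ := hdet ε hε0 (r₁ / 2) (by linarith) (r₂ / 2) (by linarith)
  obtain ⟨q₁, hq₁⟩ := exists_nat_ge (2 * R₁ / δ₁)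
  obtain ⟨q₂, hq₂⟩ := exists_nat_ge (2 * R₂ / δ₂)
  rw [div_le_iff₀ hδ₁] at hq₁
  rw [div_le_iff₀ hδ₂] at hq₂
  set q : ℕ := q₁ + q₂ + 2 with hq
  have hqR₁ : 2 * R₁ ≤ q * δ₁ := by
    have : (q₁ : ℝ) ≤ q := by exact_mod_cast (by omega : q₁ ≤ q)
    nlinarith
  have hqR₂ : 2 * R₂ ≤ q * δ₂ := by
    have : (q₂ : ℝ) ≤ q := by exact_mod_cast (by omega : q₂ ≤ q)
    nlinarith
  set L := Real.log (Fintype.card 𝒮) with hL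
  have hL0 : 0 ≤ L := Real.log_natCast_nonneg _
  obtain ⟨k₁, hk₁⟩ := size_bound (r₁ / 2) (by linarith) (q * L / ε + 1)
  obtain ⟨k₂, hk₂⟩ := size_bound (r₂ / 2) (by linarith) (q * L / ε + 1)
  refine ⟨q * (k₁ + k₂ + Nd + Nr + 1), fun n hn => ?_⟩
  have hqpos : 0 < q := by omega
  have hkge : k₁ + k₂ + Nd + Nr + 1 ≤ n / q := by
    rw [Nat.le_div_iff_mul_le hqpos, mul_comm]; exact hn
  have hdm : q * (n / q) ≤ n := Nat.mul_div_le n q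
  have hlt : n < q * (n / q + 1) := by
    have := Nat.lt_mul_div_succ n hqpos; simpa using this
  have h2k : 2 * (n / q) ≤ n := le_trans (Nat.mul_le_mul_right _ (by omega)) hdm
  obtain ⟨k, hk⟩ : ∃ k, k = n / q := ⟨_, rfl⟩
  rw [← hk] at hkge hdm hlt h2k
  obtain ⟨l, rfl⟩ : ∃ l, n = k + l := ⟨n - k, by omega⟩
  obtain ⟨P₁, P₂, u₁, u₂, E, hE, hEs, hP₁, hP₂, hEe⟩ := hNd k (by omega)
  obtain ⟨M₁, M₂, c₁, c₂, G₁, G₂, f₁, f₂, D, hG₁, hG₁s, hG₂, hG₂s, hD, hDs, hM₁, hM₂, hDe⟩ :=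
    hNr l (by omega)
  have hkpos : (0 : ℝ) < (k : ℝ) + 1 := by positivity
  have hqL : 0 ≤ q * L / ε := by positivity
  have hP₁' := hk₁ k (by omega) P₁ (by linarith)
  have hP₂' := hk₂ k (by omega) P₂ (by linarith)
  have hsz : ∀ P : ℕ, (q * L / ε + 1) * ((k : ℝ) + 1) ≤ P →
      0 < P ∧ Real.log (Fintype.card (Fin l → 𝒮)) ≤ ε * P := by
    intro P hP
    constructor
    · have : (0 : ℝ) < P := lt_of_lt_of_le (by positivity) hP
      exact_mod_cast this
    · have hl' : (l : ℝ) ≤ q * (k + 1) := by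
        have : l ≤ q * (k + 1) := by omega
        exact_mod_cast this
      rw [Fintype.card_fun, Fintype.card_fin]
      push_cast
      rw [Real.log_pow]
      have h1 := mul_le_mul_of_nonneg_left hP hε0.le
      have h2 : ε * ((q * L / ε + 1) * ((k : ℝ) + 1)) = (q * L + ε) * (k + 1) := by
        field_simp
      have h3 := mul_le_mul_of_nonneg_right hl' hL0
      nlinarith
  obtain ⟨hP₁0, hP₁c⟩ := hsz P₁ hP₁'
  obtain ⟨hP₂0, hP₂c⟩ := hsz P₂ hP₂'
  set e : Fin c₁ → Fin c₂ → (Fin l → 𝒮) → ℝ := fun γ₁ γ₂ sv =>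
    1 - (1 / ((M₁ : ℝ) * (M₂ : ℝ))) * ∑ m₁, ∑ m₂,
          (Matrix.trace (D γ₁ γ₂ m₁ m₂ *
            tensorFam fun k => ρ (f₁ γ₁ m₁ k) (f₂ γ₂ m₂ k) (sv k))).re with he
  have hb : ∀ γ₁ γ₂ sv, 0 ≤ e γ₁ γ₂ sv ∧ e γ₁ γ₂ sv ≤ 1 := by
    intro γ₁ γ₂ sv
    have hb' := fun m₁ m₂ => povm_bounds (D γ₁ γ₂) (hD γ₁ γ₂) (hDs γ₁ γ₂)
      (tensorFam_density (fun k => ρ (f₁ γ₁ m₁ k) (f₂ γ₂ m₂ k) (sv k)) fun t => hρ _ _ _) m₁ m₂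
    exact avg_bounds _ (fun i j => (hb' i j).1) (fun i j => (hb' i j).2)
  have hee : ∀ sv, ∑ γ₁, ∑ γ₂, G₁ γ₁ * G₂ γ₂ * e γ₁ γ₂ sv ≤ ε := fun sv =>
    (le_ciSup (f := fun sv => ∑ γ₁, ∑ γ₂, G₁ γ₁ * G₂ γ₂ * e γ₁ γ₂ sv)
      (Set.finite_range _).bddAbove sv).trans hDe.le
  have hMM : 0 < M₁ ∧ 0 < M₂ := by
    by_contra hcon
    have hz : (M₁ : ℝ) * M₂ = 0 := by
      rcases Nat.eq_zero_or_pos M₁ with h | h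
      · simp [h]
      · rcases Nat.eq_zero_or_pos M₂ with h' | h'
        · simp [h']
        · exact absurd ⟨h, h'⟩ hcon
    have h1 : ∀ γ₁ γ₂ sv, e γ₁ γ₂ sv = 1 := by
      intro γ₁ γ₂ sv
      simp only [he, hz, div_zero, zero_mul, sub_zero]
    have h2 := hee fun _ => Classical.arbitrary 𝒮
    simp only [h1, mul_one, ← Finset.mul_sum, hG₂s, hG₁s] at h2
    linarith
  obtain ⟨g₁, hg₁⟩ := sampling G₁ hG₁ hG₁s (fun γ₁ sv => ∑ γ₂, G₂ γ₂ * e γ₁ γ₂ sv)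
    (fun γ₁ sv => Finset.sum_nonneg fun γ₂ _ => mul_nonneg (hG₂ _) (hb _ _ _).1)
    (fun γ₁ sv => by
      calc ∑ γ₂, G₂ γ₂ * e γ₁ γ₂ sv ≤ ∑ γ₂, G₂ γ₂ :=
            Finset.sum_le_sum fun γ₂ _ => mul_le_of_le_one_right (hG₂ _) (hb _ _ _).2
        _ = 1 := hG₂s)
    ε ε hε0.le (fun sv => by
      refine le_trans (le_of_eq ?_) (hee sv)
      refine Finset.sum_congr rfl fun γ₁ _ => ?_
      rw [Finset.mul_sum]
      exact Finset.sum_congr rfl fun γ₂ _ => by ring) P₁ hP₁0 hP₁c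
  have hP₁r : (0 : ℝ) < P₁ := by exact_mod_cast hP₁0
  obtain ⟨g₂, hg₂⟩ := sampling G₂ hG₂ hG₂s
    (fun γ₂ sv => (1 / (P₁ : ℝ)) * ∑ i, e (g₁ i) γ₂ sv)
    (fun γ₂ sv => mul_nonneg (by positivity) (Finset.sum_nonneg fun i _ => (hb _ _ _).1))
    (fun γ₂ sv => by
      rw [one_div, inv_mul_le_iff₀ hP₁r]
      calc ∑ i, e (g₁ i) γ₂ sv ≤ ∑ i : Fin P₁, (1 : ℝ) :=
            Finset.sum_le_sum fun i _ => (hb _ _ _).2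
        _ = P₁ * 1 := by simp)
    (2 * ε + ε) ε (by linarith) (fun sv => by
      refine le_trans (le_of_eq ?_) (hg₁ sv)
      simp only [Finset.mul_sum]
      rw [Finset.sum_comm]
      exact Finset.sum_congr rfl fun i _ => Finset.sum_congr rfl fun γ₂ _ => by ring)
    P₂ hP₂0 hP₂c
  obtain ⟨F₁, F₂, D', hD', hDs', herr⟩ := concat ρ hρ hP₁0 hP₂0 hMM.1 hMM.2 u₁ u₂ E hE hEs
    (fun i => f₁ (g₁ i)) (fun j => f₂ (g₂ j)) (fun i j => D (g₁ i) (g₂ j))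
    (fun i j => hD _ _) (fun i j => hDs _ _) ε (2 * (2 * ε + ε) + ε)
    (fun sv => (le_ciSup (f := fun sv : Fin k → 𝒮 =>
        1 - (1 / ((P₁ : ℝ) * (P₂ : ℝ))) * ∑ m₁, ∑ m₂,
          (Matrix.trace (E m₁ m₂ * tensorFam fun k => ρ (u₁ m₁ k) (u₂ m₂ k) (sv k))).re)
      (Set.finite_range _).bddAbove sv).trans hEe.le)
    (fun sv => by
      refine le_trans (le_of_eq ?_) (hg₂ sv)
      change (1 / (P₁ : ℝ)) * ∑ i, (1 / (P₂ : ℝ)) * ∑ j, e (g₁ i) (g₂ j) sv = _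
      simp only [Finset.mul_sum]
      rw [Finset.sum_comm]
      exact Finset.sum_congr rfl fun i _ => Finset.sum_congr rfl fun γ₂ _ => by ring)
  refine ⟨P₁ * M₁, P₂ * M₂, F₁, F₂, D', hD', hDs',
    rate_bound hR₁ hδ₁ hqR₁ hdm (by omega) hP₁0 hMM.1 hM₁,
    rate_bound hR₂ hδ₂ hqR₂ hdm (by omega) hP₂0 hMM.2 hM₂,
    lt_of_le_of_lt (ciSup_le herr) (by linarith)⟩

/-- For finite `𝒮`: if the interior of the deterministic code capacity
region `ℛ_d` is nonempty, then `ℛ_r ⊆ ℛ_d`. -/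
theorem statement14 {𝒳 𝒴 𝒮 : Type*} [Fintype 𝒳] [DecidableEq 𝒳] [Fintype 𝒴] [DecidableEq 𝒴]
    [Fintype 𝒮] [Nonempty 𝒮] {d : ℕ}
    (ρ : 𝒳 → 𝒴 → 𝒮 → Matrix (Fin d) (Fin d) ℂ)
    (hρ : ∀ x y s, IsDensity (ρ x y s))
    (hInt : (interior (Rd ρ)).Nonempty) :
    Rr ρ ⊆ Rd ρ := by
  obtain ⟨r, hr₁, hr₂, hr⟩ : ∃ r : ℝ × ℝ, 0 < r.1 ∧ 0 < r.2 ∧ AchievableDet ρ r.1 r.2 := by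
    obtain ⟨p, hp⟩ := hInt
    have hclosed : Rd ρ ⊆ {r : ℝ × ℝ | 0 ≤ r.1 ∧ 0 ≤ r.2} := by
      apply closure_minimal
      · intro r hr
        exact ⟨hr.1, hr.2.1⟩
      · exact (isClosed_le continuous_const continuous_fst).inter
          (isClosed_le continuous_const continuous_snd)
    have hp0 := hclosed (interior_subset hp)
    obtain ⟨η, hη, hball⟩ := Metric.isOpen_iff.mp isOpen_interior p hp
    have hp' : (p.1 + η / 2, p.2 + η / 2) ∈ Rd ρ := by
      apply interior_subset
      apply hball
      rw [Metric.mem_ball, Prod.dist_eq]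
      simp only [Real.dist_eq, add_sub_cancel_left, max_self]
      rw [abs_of_pos (by linarith)]
      linarith
    obtain ⟨r, hrO, hrA⟩ := mem_closure_iff.mp hp' {r : ℝ × ℝ | 0 < r.1 ∧ 0 < r.2}
      ((isOpen_lt continuous_const continuous_fst).inter
        (isOpen_lt continuous_const continuous_snd))
      ⟨by have := hp0.1; simp only; linarith, by have := hp0.2; simp only; linarith⟩
    exact ⟨r, hrO.1, hrO.2, hrA⟩
  exact closure_mono fun R hR => derandomize ρ hρ hr₁ hr₂ hr hR
end
end

section
/- Let Γ be a nonempty finite set with a probability distribution G on it, let T be a nonempty finite set, let μ > 0, and let K be a positive integer with |T|·e^{−μK} < 1. Suppose that for each s∈T a function e_s : Γ → [0,1] is given with Σ_{γ∈Γ} G(γ)·e_s(γ) ≤ (e^{μ}−1)/e². Then there exist γ₁,…,γ_K ∈ Γ such that (1/K)·Σ_{k=1}^{K} e_s(γ_k) ≤ μ for every s∈T. -/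
/-- derandomization selection lemma. If `Γ` is a nonempty finite
probability space, `T` a nonempty finite set, `μ > 0`, and `K` a positive integer with
`|T|·e^{−μK} < 1`, and each `e_s : Γ → [0,1]` has mean at most `(e^μ − 1)/e²`, then there
are `γ₁, …, γ_K ∈ Γ` whose empirical mean of `e_s` is at most `μ` for every `s ∈ T`. -/
theorem statement15 {Γ T : Type*} [Fintype Γ] [Nonempty Γ] [Fintype T] [Nonempty T]
    (G : Γ → ℝ) (hG0 : ∀ γ, 0 ≤ G γ) (hG1 : ∑ γ, G γ = 1)
    (μ : ℝ) (hμ : 0 < μ) (K : ℕ) (hK : 0 < K)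
    (hTK : (Fintype.card T : ℝ) * Real.exp (-(μ * K)) < 1)
    (e : T → Γ → ℝ) (he : ∀ s γ, e s γ ∈ Set.Icc (0 : ℝ) 1)
    (hmean : ∀ s, ∑ γ, G γ * e s γ ≤ (Real.exp μ - 1) / Real.exp 2) :
    ∃ g : Fin K → Γ, ∀ s, (1 / (K : ℝ)) * ∑ k, e s (g k) ≤ μ := by
  by_contra hcon
  push Not at hcon
  have hKpos : (0 : ℝ) < K := by exact_mod_cast hK
  -- chord bound for the moment generating function at parameter 2
  have hconv : ∀ x : ℝ, 0 ≤ x → x ≤ 1 → Real.exp (2 * x) ≤ 1 + (Real.exp 2 - 1) * x := by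
    intro x h0 h1
    have h := convexOn_exp.2 (Set.mem_univ (0 : ℝ)) (Set.mem_univ (2 : ℝ))
      (sub_nonneg.2 h1) h0 (by ring)
    simp only [smul_eq_mul, mul_zero, zero_add, Real.exp_zero] at h
    rw [mul_comm 2 x]
    linarith
  have hmgf : ∀ s, ∑ γ, G γ * Real.exp (2 * e s γ) ≤ Real.exp μ := by
    intro s
    have h1 : ∑ γ, G γ * Real.exp (2 * e s γ)
        ≤ ∑ γ, (G γ + (Real.exp 2 - 1) * (G γ * e s γ)) := by
      apply Finset.sum_le_sum
      intro γ _
      have := mul_le_mul_of_nonneg_left (hconv _ (he s γ).1 (he s γ).2) (hG0 γ)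
      linarith
    rw [Finset.sum_add_distrib, ← Finset.mul_sum, hG1] at h1
    have h2 : (1 : ℝ) ≤ Real.exp 2 := Real.one_le_exp (by norm_num)
    have h3 : (1 : ℝ) ≤ Real.exp μ := Real.one_le_exp hμ.le
    have h4 := mul_le_mul_of_nonneg_left (hmean s) (sub_nonneg.2 h2)
    have h5 : (Real.exp 2 - 1) * ((Real.exp μ - 1) / Real.exp 2) ≤ Real.exp μ - 1 := by
      rw [← mul_div_assoc, div_le_iff₀ (Real.exp_pos 2)]
      nlinarith
    linarith
  have hE : ∀ s, ∑ g : Fin K → Γ, (∏ k, G (g k)) * Real.exp (2 * ∑ k, e s (g k) - 2 * (μ * K))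
      ≤ Real.exp (-(μ * K)) := by
    intro s
    have h1 : ∑ g : Fin K → Γ, (∏ k, G (g k)) * Real.exp (2 * ∑ k, e s (g k) - 2 * (μ * K))
        = (∑ γ, G γ * Real.exp (2 * e s γ)) ^ K * Real.exp (-(2 * (μ * K))) := by
      rw [Fintype.sum_pow, Finset.sum_mul]
      apply Finset.sum_congr rfl
      intro g _
      rw [Finset.prod_mul_distrib, ← Real.exp_sum, ← Finset.mul_sum, sub_eq_add_neg,
        Real.exp_add, mul_assoc]
    have h0 : 0 ≤ ∑ γ, G γ * Real.exp (2 * e s γ) :=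
      Finset.sum_nonneg fun γ _ => mul_nonneg (hG0 γ) (Real.exp_pos _).le
    rw [h1]
    calc _ ≤ Real.exp μ ^ K * Real.exp (-(2 * (μ * K))) :=
          mul_le_mul_of_nonneg_right (pow_le_pow_left₀ h0 (hmgf s) K) (Real.exp_pos _).le
      _ = Real.exp (-(μ * K)) := by
          rw [← Real.exp_nat_mul, ← Real.exp_add]
          congr 1
          ring
  have hone : (1 : ℝ) ≤ ∑ s, ∑ g : Fin K → Γ,
      (∏ k, G (g k)) * Real.exp (2 * ∑ k, e s (g k) - 2 * (μ * K)) := by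
    rw [Finset.sum_comm]
    have h1 : (1 : ℝ) = ∑ g : Fin K → Γ, ∏ k, G (g k) := by
      rw [← Fintype.sum_pow, hG1, one_pow]
    rw [h1]
    apply Finset.sum_le_sum
    intro g _
    rw [← Finset.mul_sum]
    apply le_mul_of_one_le_right (Finset.prod_nonneg fun k _ => hG0 _)
    obtain ⟨s, hs⟩ := hcon g
    have h2 : μ * K < ∑ k, e s (g k) := by
      rwa [one_div, inv_mul_eq_div, lt_div_iff₀ hKpos] at hs
    have h3 : (1 : ℝ) ≤ Real.exp (2 * ∑ k, e s (g k) - 2 * (μ * K)) :=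
      Real.one_le_exp (by linarith)
    exact h3.trans (Finset.single_le_sum
      (f := fun s => Real.exp (2 * ∑ k, e s (g k) - 2 * (μ * K)))
      (fun t _ => (Real.exp_pos _).le) (Finset.mem_univ s))
  have hsum := Finset.sum_le_sum fun s (_ : s ∈ (Finset.univ : Finset T)) => hE s
  rw [Finset.sum_const, nsmul_eq_mul, Finset.card_univ] at hsum
  linarith
end

section
/- Let N, A be positive integers, δ∈(0,1), ρ a density matrix on ℂ^N, and a, b unit vectors in ℂ^A. Let H' := ℂ^N ⊕ (ℂ^N⊗ℂ^A) ⊕ (ℂ^N⊗ℂ^A), let M : ℂ^N → H' be the isometry M(h) := (1/√(1+2δ²))·(h ⊕ δ·(h⊗a) ⊕ δ·(h⊗b)), and let ρ̃ be the operator on H' that acts as ρ on the first direct summand and as 0 on the other summands. Then ‖MρM† − ρ̃‖₁ ≤ 8δ, where ‖·‖₁ is the trace norm. -/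
open scoped ComplexOrder Matrix

noncomputable section

/-- Functional calculus for Hermitian matrices (junk value `0` on non-Hermitian input). -/
def matFun {m : Type*} [Fintype m] [DecidableEq m] (f : ℝ → ℝ) (A : Matrix m m ℂ) :
    Matrix m m ℂ :=
  if hA : A.IsHermitian then
    (hA.eigenvectorUnitary : Matrix m m ℂ) *
        Matrix.diagonal (fun i => (f (hA.eigenvalues i) : ℂ)) *
      star (hA.eigenvectorUnitary : Matrix m m ℂ)
  else 0

/-- The trace norm (sum of singular values) of a square matrix. -/
def traceNorm {m : Type*} [Fintype m] [DecidableEq m] (A : Matrix m m ℂ) : ℝ :=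
  (Matrix.trace (matFun Real.sqrt (Aᴴ * A))).re

/-- The index type of `H' = ℂ^N ⊕ (ℂ^N ⊗ ℂ^A) ⊕ (ℂ^N ⊗ ℂ^A)`. -/
abbrev TiltIdx (N A : ℕ) : Type := Fin N ⊕ (Fin N × Fin A) ⊕ (Fin N × Fin A)

/-- The tilting isometry `M : ℂ^N → H'`, `M(h) = (1+2δ²)^{-1/2}(h ⊕ δ h⊗a ⊕ δ h⊗b)`,
written as a matrix. -/
def tiltM (N A : ℕ) (δ : ℝ) (a b : Fin A → ℂ) :
    Matrix (TiltIdx N A) (Fin N) ℂ :=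
  Matrix.of fun p j =>
    ((1 / Real.sqrt (1 + 2 * δ ^ 2) : ℝ) : ℂ) *
      (match p with
        | Sum.inl i => if i = j then 1 else 0
        | Sum.inr (Sum.inl (i, r)) => (δ : ℂ) * (if i = j then 1 else 0) * a r
        | Sum.inr (Sum.inr (i, r)) => (δ : ℂ) * (if i = j then 1 else 0) * b r)

/-- The embedding of an `N×N`-matrix into `H'`, acting as `ρ` on the first direct
summand and as `0` elsewhere. -/
def padFirst (N A : ℕ) (ρ : Matrix (Fin N) (Fin N) ℂ) :
    Matrix (TiltIdx N A) (TiltIdx N A) ℂ :=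
  Matrix.of fun p q =>
    match p, q with
    | Sum.inl i, Sum.inl j => ρ i j
    | _, _ => 0

lemma frob_nonneg {m n : Type*} [Fintype m] [Fintype n] (K : Matrix m n ℂ) :
    0 ≤ (Kᴴ * K).trace.re := by
  have h := (Matrix.posSemidef_conjTranspose_mul_self K).trace_nonneg
  exact (Complex.le_def.1 h).1

lemma frob_amgm {m n : Type*} [Fintype m] [Fintype n] (X Y : Matrix m n ℂ) (t : ℝ) :
    2 * t * (Xᴴ * Y).trace.re ≤ t ^ 2 * (Xᴴ * X).trace.re + (Yᴴ * Y).trace.re := by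
  have h := frob_nonneg ((t : ℂ) • X - Y)
  have h2 : (Yᴴ * X).trace.re = (Xᴴ * Y).trace.re := by
    have : Yᴴ * X = (Xᴴ * Y)ᴴ := by simp
    rw [this, Matrix.trace_conjTranspose]
    simp
  simp [Matrix.sub_mul, Matrix.mul_sub] at h
  rw [h2] at h
  nlinarith

/-- A contraction realizing the trace norm. -/
lemma exists_contraction {m : Type*} [Fintype m] [DecidableEq m] (D : Matrix m m ℂ) :
    ∃ W : Matrix m m ℂ, (1 - W * Wᴴ).PosSemidef ∧ traceNorm D = (W * D).trace.re := by
  have hH : (Dᴴ * D).IsHermitian := Matrix.isHermitian_conjTranspose_mul_self D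
  have hev : ∀ i, 0 ≤ hH.eigenvalues i :=
    (Matrix.posSemidef_conjTranspose_mul_self D).eigenvalues_nonneg
  obtain ⟨U, hU⟩ : ∃ U : Matrix m m ℂ, U = (hH.eigenvectorUnitary : Matrix m m ℂ) := ⟨_, rfl⟩
  have hUU : Uᴴ * U = 1 := by
    rw [hU]; exact Unitary.coe_star_mul_self hH.eigenvectorUnitary
  have hUU' : U * Uᴴ = 1 := by
    rw [hU]; exact Unitary.coe_mul_star_self hH.eigenvectorUnitary
  have hspec : Dᴴ * D = U * Matrix.diagonal (fun i => (hH.eigenvalues i : ℂ)) * Uᴴ := by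
    have := hH.spectral_theorem
    rw [Unitary.conjStarAlgAut_apply] at this
    rw [hU]
    exact this
  let S : Matrix m m ℂ := Matrix.diagonal (fun i => (((Real.sqrt (hH.eigenvalues i))⁻¹ : ℝ) : ℂ))
  let L : Matrix m m ℂ := Matrix.diagonal (fun i => (hH.eigenvalues i : ℂ))
  have hS : Sᴴ = S := by
    simp only [S, Matrix.diagonal_conjTranspose]
    congr 1
    ext i
    simp
  refine ⟨U * S * Uᴴ * Dᴴ, ?_, ?_⟩
  · have h1 : U * S * Uᴴ * Dᴴ * (U * S * Uᴴ * Dᴴ)ᴴ = U * (S * L * S) * Uᴴ := by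
      calc _ = U * S * Uᴴ * (Dᴴ * D) * (U * S * Uᴴ) := by
            simp [hS, Matrix.mul_assoc]
        _ = U * S * (Uᴴ * U) * L * (Uᴴ * U) * S * Uᴴ := by
            rw [hspec]; simp only [L, Matrix.mul_assoc]
        _ = _ := by rw [hUU]; simp [Matrix.mul_assoc]
    have h2 : 1 - U * (S * L * S) * Uᴴ = U * (1 - S * L * S) * Uᴴ := by
      rw [Matrix.mul_sub, Matrix.sub_mul, Matrix.mul_one, hUU']
    rw [h1, h2]
    apply Matrix.PosSemidef.mul_mul_conjTranspose_same
    have h3 : 1 - S * L * S = Matrix.diagonal (fun i => ((1 - (Real.sqrt (hH.eigenvalues i))⁻¹ *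
        hH.eigenvalues i * (Real.sqrt (hH.eigenvalues i))⁻¹ : ℝ) : ℂ)) := by
      simp only [S, L, Matrix.diagonal_mul_diagonal, ← Matrix.diagonal_one, Matrix.diagonal_sub]
      congr 1
      ext i
      push_cast
      rfl
    rw [h3, Matrix.posSemidef_diagonal_iff]
    intro i
    rw [Complex.zero_le_real]
    have hs := Real.sq_sqrt (hev i)
    by_cases h0 : Real.sqrt (hH.eigenvalues i) = 0
    · rw [h0]; simp
    · have : (Real.sqrt (hH.eigenvalues i))⁻¹ * hH.eigenvalues i *
          (Real.sqrt (hH.eigenvalues i))⁻¹ = 1 := by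
        nth_rewrite 2 [← hs]
        field_simp
      rw [this]; simp
  · have h1 : U * S * Uᴴ * Dᴴ * D = U * (S * L) * Uᴴ := by
      calc _ = U * S * Uᴴ * (Dᴴ * D) := by simp [Matrix.mul_assoc]
        _ = U * S * (Uᴴ * U) * L * Uᴴ := by
            rw [hspec]; simp only [L, Matrix.mul_assoc]
        _ = _ := by rw [hUU]; simp [Matrix.mul_assoc]
    rw [h1, traceNorm, matFun, dif_pos hH, ← hU, Matrix.star_eq_conjTranspose]
    have h2 : S * L = Matrix.diagonal (fun i => (Real.sqrt (hH.eigenvalues i) : ℂ)) := by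
      simp only [S, L, Matrix.diagonal_mul_diagonal]
      congr 1
      ext i
      rw [← Complex.ofReal_mul]
      congr 1
      have hs := Real.sq_sqrt (hev i)
      by_cases h0 : Real.sqrt (hH.eigenvalues i) = 0
      · rw [h0]; simp
      · nth_rewrite 2 [← hs]
        field_simp
    rw [h2]

lemma frob_contraction {m n : Type*} [Fintype m] [DecidableEq m] [Fintype n]
    (W : Matrix m m ℂ) (hW : (1 - W * Wᴴ).PosSemidef) (K : Matrix m n ℂ) :
    ((Wᴴ * K)ᴴ * (Wᴴ * K)).trace.re ≤ (Kᴴ * K).trace.re := by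
  have h := (Complex.le_def.1 (hW.conjTranspose_mul_mul_same K).trace_nonneg).1
  have e : Kᴴ * (1 - W * Wᴴ) * K = Kᴴ * K - (Wᴴ * K)ᴴ * (Wᴴ * K) := by
    simp [Matrix.mul_sub, Matrix.sub_mul, Matrix.mul_assoc]
  rw [e] at h
  simp only [Matrix.trace_sub, Complex.sub_re, Complex.zero_re] at h
  linarith

lemma tilt_inner (N A : ℕ) (δ ε : ℝ) (a b : Fin A → ℂ)
    (ha : ∑ r, ‖a r‖ ^ 2 = (1 : ℝ)) (hb : ∑ r, ‖b r‖ ^ 2 = (1 : ℝ)) :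
    (tiltM N A δ a b)ᴴ * tiltM N A ε a b =
      (((1 / Real.sqrt (1 + 2 * δ ^ 2)) * (1 / Real.sqrt (1 + 2 * ε ^ 2)) *
        (1 + 2 * δ * ε) : ℝ) : ℂ) • (1 : Matrix (Fin N) (Fin N) ℂ) := by
  have key : ∀ v : Fin A → ℂ, ∑ r, ‖v r‖ ^ 2 = (1 : ℝ) → ∑ r, star (v r) * v r = 1 := by
    intro v hv
    have : ∀ r, star (v r) * v r = ((‖v r‖ ^ 2 : ℝ) : ℂ) := by
      intro r
      rw [Complex.star_def, Complex.conj_mul']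
      push_cast; rfl
    simp_rw [this]
    rw [← Complex.ofReal_sum, hv]; simp
  have ka := key a ha
  have kb := key b hb
  generalize hc : 1 / Real.sqrt (1 + 2 * δ ^ 2) = c
  generalize hd : 1 / Real.sqrt (1 + 2 * ε ^ 2) = d
  have blk : ∀ (v : Fin A → ℂ), ∑ r, star (v r) * v r = 1 → ∀ i j : Fin N,
      ∑ x : Fin N × Fin A, star ((c : ℂ) * ((δ : ℂ) * (if x.1 = i then 1 else 0) * v x.2)) *
        ((d : ℂ) * ((ε : ℂ) * (if x.1 = j then 1 else 0) * v x.2)) =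
        (c * d * δ * ε : ℂ) * (1 : Matrix (Fin N) (Fin N) ℂ) i j := by
    intro v hv i j
    rw [Fintype.sum_prod_type]
    have : ∀ x : Fin N, ∑ y, star ((c : ℂ) * ((δ : ℂ) * (if x = i then 1 else 0) * v y)) *
        ((d : ℂ) * ((ε : ℂ) * (if x = j then 1 else 0) * v y)) =
        (if x = i then (if x = j then (c * d * δ * ε : ℂ) else 0) else 0) := by
      intro x
      have hz : (c * d * δ * ε : ℂ) = ∑ y, (c * d * δ * ε : ℂ) * (star (v y) * v y) := by
        rw [← Finset.mul_sum, hv, mul_one]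
      rw [hz]
      split_ifs
      · apply Finset.sum_congr rfl
        intro y _
        simp
        ring
      all_goals simp
    simp_rw [this]
    simp [Matrix.one_apply]
  ext i j
  have ea := blk a ka i j
  have eb := blk b kb i j
  simp only [Matrix.mul_apply, Matrix.conjTranspose_apply, tiltM, Matrix.of_apply,
    Fintype.sum_sum_type, hc, hd]
  rw [ea, eb]
  simp only [Matrix.smul_apply, smul_eq_mul]
  by_cases hij : i = j
  · subst hij
    simp
    ring
  · simp [hij, Ne.symm hij, Matrix.one_apply]

lemma pad_eq (N A : ℕ) (a b : Fin A → ℂ) (ρ : Matrix (Fin N) (Fin N) ℂ) :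
    padFirst N A ρ = tiltM N A 0 a b * ρ * (tiltM N A 0 a b)ᴴ := by
  ext p q
  rcases p with i | ⟨i, r⟩ | ⟨i, r⟩ <;> rcases q with j | ⟨j, s⟩ | ⟨j, s⟩ <;>
    simp [padFirst, tiltM, Matrix.mul_apply]

/-- Tilting perturbs a density matrix by at most `8δ` in trace norm:
`‖MρM† − ρ̃‖₁ ≤ 8δ`. -/
theorem statement16 (N A : ℕ) (hN : 0 < N) (hA : 0 < A) (δ : ℝ)
    (hδ : δ ∈ Set.Ioo (0 : ℝ) 1)
    (ρ : Matrix (Fin N) (Fin N) ℂ) (hρ : IsDensity ρ)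
    (a b : Fin A → ℂ) (ha : ∑ r, ‖a r‖ ^ 2 = (1 : ℝ)) (hb : ∑ r, ‖b r‖ ^ 2 = (1 : ℝ)) :
    traceNorm (tiltM N A δ a b * ρ * (tiltM N A δ a b)ᴴ - padFirst N A ρ) ≤ 8 * δ := by
  obtain ⟨hδ0, hδ1⟩ := hδ
  obtain ⟨hpsd, htr⟩ := hρ
  obtain ⟨B, hB⟩ : ∃ B : Matrix (Fin N) (Fin N) ℂ, ρ = B * Bᴴ := by
    open scoped MatrixOrder in
    obtain ⟨B, hB⟩ := CStarAlgebra.nonneg_iff_eq_star_mul_self.1 hpsd.nonneg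
    exact ⟨Bᴴ, by simpa [Matrix.star_eq_conjTranspose] using hB⟩
  rw [pad_eq N A a b]
  have hMM := tilt_inner N A δ δ a b ha hb
  have hMV := tilt_inner N A δ 0 a b ha hb
  have hVM := tilt_inner N A 0 δ a b ha hb
  have hVV := tilt_inner N A 0 0 a b ha hb
  generalize tiltM N A δ a b = M at *
  generalize tiltM N A 0 a b = V at *
  have hs : Real.sqrt (1 + 2 * δ ^ 2) ^ 2 = 1 + 2 * δ ^ 2 := Real.sq_sqrt (by positivity)
  have hsp : 0 < Real.sqrt (1 + 2 * δ ^ 2) := Real.sqrt_pos.2 (by positivity)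
  generalize Real.sqrt (1 + 2 * δ ^ 2) = s at *
  have e1 : 1 / s * (1 / s) * (1 + 2 * δ * δ) = 1 := by
    field_simp; nlinarith
  rw [e1] at hMM
  simp at hMM hMV hVM hVV
  obtain ⟨W, hW, hWn⟩ := exists_contraction (M * ρ * Mᴴ - V * ρ * Vᴴ)
  rw [hWn]
  have hBtr : (Bᴴ * B).trace = 1 := by rw [Matrix.trace_mul_comm, ← hB, htr]
  -- the two Frobenius norms
  have fM : ((M * B)ᴴ * (M * B)).trace.re = 1 := by
    have : (M * B)ᴴ * (M * B) = Bᴴ * (Mᴴ * M) * B := by simp [Matrix.mul_assoc]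
    rw [this, hMM]; simp [hBtr]
  have fV : ((V * B)ᴴ * (V * B)).trace.re = 1 := by
    have : (V * B)ᴴ * (V * B) = Bᴴ * (Vᴴ * V) * B := by simp [Matrix.mul_assoc]
    rw [this, hVV]; simp [hBtr]
  have fE : (((M - V) * B)ᴴ * ((M - V) * B)).trace.re = 2 - 2 * s⁻¹ := by
    have : ((M - V) * B)ᴴ * ((M - V) * B) =
        Bᴴ * (Mᴴ * M - Mᴴ * V - (Vᴴ * M - Vᴴ * V)) * B := by
      simp only [Matrix.conjTranspose_mul, Matrix.conjTranspose_sub, Matrix.mul_assoc,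
        Matrix.sub_mul, Matrix.mul_sub]
      abel
    rw [this, hMM, hMV, hVM, hVV]
    simp [hBtr, Matrix.mul_sub, Matrix.sub_mul, ← Complex.ofReal_inv]
    ring
  have hk : 2 - 2 * s⁻¹ ≤ 2 * δ ^ 2 := by
    have h1 : s⁻¹ * s = 1 := inv_mul_cancel₀ hsp.ne'
    have h2 : 0 < s⁻¹ := inv_pos.2 hsp
    nlinarith [mul_nonneg h2.le (mul_nonneg (sq_nonneg (s - 1)) (by linarith : 0 ≤ s + 2))]
  have split : (W * (M * ρ * Mᴴ - V * ρ * Vᴴ)).trace =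
      ((Wᴴ * (M * B))ᴴ * ((M - V) * B)).trace + ((Wᴴ * ((M - V) * B))ᴴ * (V * B)).trace := by
    have h1 : ((Wᴴ * (M * B))ᴴ * ((M - V) * B)).trace =
        (W * ((M - V) * ρ * Mᴴ)).trace := by
      rw [hB]
      calc _ = ((Bᴴ * Mᴴ) * (W * ((M - V) * B))).trace := by simp [Matrix.mul_assoc]
        _ = _ := by rw [Matrix.trace_mul_comm]; simp only [Matrix.mul_assoc]
    have h2 : ((Wᴴ * ((M - V) * B))ᴴ * (V * B)).trace =
        (W * (V * ρ * (M - V)ᴴ)).trace := by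
      rw [hB]
      calc _ = ((Bᴴ * (M - V)ᴴ) * (W * (V * B))).trace := by
            simp only [Matrix.conjTranspose_mul, Matrix.conjTranspose_conjTranspose,
              Matrix.mul_assoc]
        _ = _ := by rw [Matrix.trace_mul_comm]; simp only [Matrix.mul_assoc]
    rw [h1, h2, ← Matrix.trace_add, ← Matrix.mul_add]
    congr 2
    simp only [Matrix.conjTranspose_sub, Matrix.sub_mul, Matrix.mul_sub]
    abel
  rw [split, Complex.add_re]
  have b1 := frob_amgm (Wᴴ * (M * B)) ((M - V) * B) δ
  have b2 := frob_amgm (Wᴴ * ((M - V) * B)) (V * B) δ⁻¹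
  have c1 := frob_contraction W hW (M * B)
  have c2 := frob_contraction W hW ((M - V) * B)
  rw [fM] at c1
  rw [fE] at c2 b1
  rw [fV] at b2
  generalize ((Wᴴ * (M * B))ᴴ * ((M - V) * B)).trace.re = x at *
  generalize ((Wᴴ * ((M - V) * B))ᴴ * (V * B)).trace.re = y at *
  have hx : 2 * δ * x ≤ 2 * δ * (2 * δ) := by nlinarith [sq_nonneg δ]
  have hy : 2 * δ⁻¹ * y ≤ 2 * δ⁻¹ * (2 * δ) := by
    have h1 : δ⁻¹ * δ = 1 := inv_mul_cancel₀ hδ0.ne'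
    have h3 : (δ⁻¹) ^ 2 * δ ^ 2 = 1 := by rw [← mul_pow, h1]; simp
    nlinarith [mul_le_mul_of_nonneg_left (c2.trans hk) (sq_nonneg δ⁻¹)]
  have hx' := le_of_mul_le_mul_left hx (by positivity)
  have hy' := le_of_mul_le_mul_left hy (by positivity)
  linarith
end
end
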